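/- arXiv:1806.05460 — 2 statements merged into one kernel-verified Lean document; each statement's English description precedes it below -/
import Mathlib

section
/- Let c > 1, α ∈ (1,2), and let θ be a smooth admissible function with respect to c and α with Fourier coefficients (c_k)_{k∈ℤ}, i.e. θ(x) = ∑_{k∈ℤ} c_k e^{i k c̃ x} with c̃ = 2πα/log c. Let φ₁ be the measure on (0,∞) with φ₁((r,∞)) = r^{−α} θ(log r) for all r > 0. Then for every x ∈ ℝ the series below converges absolutely and ∫₀^∞ (e^{ixy} − 1 − ixy) dφ₁(y) = −∑_{k∈ℤ} c_k Γ(i k c̃ − α + 1) (−ix)^{α − i k c̃}, where Γ is the complex Gamma function, complex powers are taken with the principal branch, and 0^z := 0 for Re z > 0. -/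
/-!
For `y > 0`, `e^{ixy} - 1 - ixy = ∫₀^y ix (e^{ixr} - 1) dr`. Fubini
(`integral_primitive_eq_integral_tail`) therefore turns the integral against `φ₁` into
`∫₀^∞ ix (e^{ixr} - 1) φ₁((r,∞)) dr`, and the Fourier series of `θ` expands the tail
`φ₁((r,∞)) = r^{-α} θ(log r)` as `∑ c_k r^{s_k - 1}` with `s_k = i k c̃ - α + 1`. Integrating term by
term leaves the Mellin transforms

  `∫₀^∞ (e^{-l r} - 1) r^{s-1} dr = Γ(s) l^{-s}`,  `-1 < Re s < 0`, `l = -ix`.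

This formula holds for real `l > 0` by parts from Euler's integral, for `Re l > 0` by the identity
theorem, and for `l = -ix`, `x ≠ 0`, by dominated convergence (`integral_kernel_imag`).

All `s_k` have real part `1 - α`, so the `L¹` norms of the Mellin integrands are bounded uniformly in
`k`. As `∑ |c_k| < ∞`, this justifies the termwise integration and at the same time proves the
absolute convergence of the series, with no need for the decay of `Γ` along vertical lines.
-/


open MeasureTheory Real Filter Set Complex

noncomputable section

def IsAdmissible (c α : ℝ) (θ : ℝ → ℝ) : Prop :=
  (∀ x, 0 < θ x) ∧
  Function.Periodic θ (Real.log (c ^ (1 / α))) ∧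
  ∀ y δ : ℝ, 0 ≤ δ → θ (y + δ) ≤ Real.exp (α * δ) * θ y

/-- A smooth admissible function `θ` w.r.t. `c` and `α`, with Fourier coefficients `cfs`:
`θ` is admissible, continuous, and has an absolutely convergent Fourier series
`θ x = ∑_{k∈ℤ} cfs k · e^{i k c̃ x}` with `c̃ = 2πα/log c`, whose coefficients satisfy
`cfs (-k) = conj (cfs k)` and the quadratic decay `‖cfs k‖ ≤ C/k²`. -/
def IsSmoothAdmissible (c α : ℝ) (θ : ℝ → ℝ) (cfs : ℤ → ℂ) : Prop :=
  IsAdmissible c α θ ∧ Continuous θ ∧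
  (∀ k : ℤ, cfs (-k) = starRingEnd ℂ (cfs k)) ∧
  (∃ C > 0, ∀ k : ℤ, k ≠ 0 → ‖cfs k‖ ≤ C / (k : ℝ) ^ 2) ∧
  Summable (fun k : ℤ => ‖cfs k‖) ∧
  ∀ x : ℝ, HasSum
    (fun k : ℤ => cfs k * Complex.exp (Complex.I * (k : ℂ) * ((2 * Real.pi * α / Real.log c : ℝ) : ℂ) * (x : ℂ)))
    ((θ x : ℂ))


/-! ### The Mellin transform of `r ↦ exp (-l r) - 1` -/

/-- The integrable majorant `min 1 r * r ^ (a - 1)` (for `-1 < a < 0`) on `(0, ∞)` of the integrand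
`(exp (-l r) - 1) * r ^ (s - 1)` with `s.re = a`, up to a constant depending on a bound for `‖l‖`. -/
def kerBound (a r : ℝ) : ℝ := min 1 r * r ^ (a - 1)

lemma kerBound_integrable {a : ℝ} (h1 : -1 < a) (h2 : a < 0) :
    IntegrableOn (kerBound a) (Ioi 0) := by
  rw [← Ioc_union_Ioi_eq_Ioi (@zero_le_one ℝ _ _ _ _), integrableOn_union]
  constructor
  · have h : IntegrableOn (fun r : ℝ => r ^ a) (Ioc 0 1) :=
      (intervalIntegrable_iff_integrableOn_Ioc_of_le zero_le_one).mp
        (intervalIntegral.intervalIntegrable_rpow' h1)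
    refine h.congr_fun (fun r hr => ?_) measurableSet_Ioc
    simp only [kerBound]
    rw [min_eq_right hr.2, Real.rpow_sub_one hr.1.ne']
    field_simp [hr.1.ne']
  · have h : IntegrableOn (fun r : ℝ => r ^ (a - 1)) (Ioi 1) :=
      integrableOn_Ioi_rpow_of_lt (by linarith) one_pos
    refine h.congr_fun (fun r hr => ?_) measurableSet_Ioi
    simp only [kerBound]
    rw [min_eq_left (le_of_lt hr), one_mul]

lemma norm_exp_sub_one_le_min {z : ℂ} (hz : z.re ≤ 0) :
    ‖Complex.exp z - 1‖ ≤ 2 * min 1 ‖z‖ := by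
  rcases le_total ‖z‖ 1 with h | h
  · rw [min_eq_right h]
    exact Complex.norm_exp_sub_one_le h
  · rw [min_eq_left h]
    calc ‖Complex.exp z - 1‖ ≤ ‖Complex.exp z‖ + ‖(1 : ℂ)‖ := norm_sub_le _ _
      _ ≤ 2 * 1 := by
        rw [Complex.norm_exp, norm_one]
        have := Real.exp_le_one_iff.mpr hz
        linarith

lemma norm_exp_neg_mul_sub_one_le {l : ℂ} {L r : ℝ} (hl : 0 ≤ l.re) (hL : ‖l‖ ≤ L)
    (hL1 : 1 ≤ L) (hr : 0 < r) :
    ‖Complex.exp (-(l * r)) - 1‖ ≤ 2 * L * min 1 r := by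
  have h1 : (-(l * r)).re ≤ 0 := by
    simp only [Complex.neg_re, Complex.re_mul_ofReal]
    nlinarith
  refine (norm_exp_sub_one_le_min h1).trans ?_
  rw [norm_neg, norm_mul, Complex.norm_real, Real.norm_of_nonneg hr.le, mul_assoc]
  gcongr
  rcases le_total r 1 with h | h
  · rw [min_eq_right h]
    exact (min_le_right _ _).trans (by gcongr)
  · rw [min_eq_left h]
    exact (min_le_left _ _).trans (by linarith)

lemma norm_kernel_le {s l : ℂ} {L r : ℝ} (hl : 0 ≤ l.re) (hL : ‖l‖ ≤ L)
    (hL1 : 1 ≤ L) (hr : 0 < r) :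
    ‖(Complex.exp (-(l * r)) - 1) * (r : ℂ) ^ (s - 1)‖ ≤ 2 * L * kerBound s.re r := by
  rw [norm_mul, Complex.norm_cpow_eq_rpow_re_of_pos hr, kerBound, ← mul_assoc]
  simp only [Complex.sub_re, Complex.one_re]
  gcongr
  exact norm_exp_neg_mul_sub_one_le hl hL hL1 hr

lemma measurable_kernel (s l : ℂ) :
    Measurable (fun r : ℝ => (Complex.exp (-(l * r)) - 1) * (r : ℂ) ^ (s - 1)) := by
  fun_prop

lemma kernel_integrable {s l : ℂ} (h1 : -1 < s.re) (h2 : s.re < 0) (hl : 0 ≤ l.re) :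
    IntegrableOn (fun r : ℝ => (Complex.exp (-(l * r)) - 1) * (r : ℂ) ^ (s - 1)) (Ioi 0) := by
  refine Integrable.mono' ((kerBound_integrable h1 h2).const_mul (2 * (max 1 ‖l‖)))
    (measurable_kernel s l).aestronglyMeasurable ?_
  filter_upwards [ae_restrict_mem measurableSet_Ioi] with r hr
  exact norm_kernel_le hl (le_max_right _ _) (le_max_left _ _) hr

/-- The Mellin transform at a real parameter `l > 0`, by integration by parts against `r ^ s / s`,
which reduces it to Euler's integral for `Γ (s + 1)`. -/
lemma integral_kernel_of_pos {s : ℂ} (h1 : -1 < s.re) (h2 : s.re < 0) {l : ℝ} (hl : 0 < l) :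
    ∫ r : ℝ in Ioi 0, (Complex.exp (-((l : ℂ) * r)) - 1) * (r : ℂ) ^ (s - 1)
      = Complex.Gamma s * (l : ℂ) ^ (-s) := by
  have hs0 : s ≠ 0 := by
    rintro rfl; simp at h2
  have hlc : (l : ℂ) ≠ 0 := by exact_mod_cast hl.ne'
  have hl0 : 0 ≤ (l : ℂ).re := by simpa using hl.le
  have hs1 : 0 < (s + 1).re := by simp; linarith
  have key := integral_Ioi_mul_deriv_eq_deriv_mul (a := (0 : ℝ)) (a' := (0 : ℂ)) (b' := (0 : ℂ))
    (u := fun r : ℝ => Complex.exp (-((l : ℂ) * r)) - 1)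
    (u' := fun r : ℝ => -(l : ℂ) * Complex.exp (-((l : ℂ) * r)))
    (v := fun r : ℝ => (r : ℂ) ^ s / s)
    (v' := fun r : ℝ => (r : ℂ) ^ (s - 1)) ?_ ?_ ?_ ?_ ?_ ?_
  · rw [key]
    have h3 : ∀ r : ℝ, -(l : ℂ) * Complex.exp (-((l : ℂ) * r)) * ((r : ℂ) ^ s / s)
        = (-(l : ℂ) / s) * ((r : ℂ) ^ ((s + 1) - 1) * Complex.exp (-((l : ℂ) * r))) := by
      intro r
      rw [add_sub_cancel_right]
      ring
    simp_rw [h3]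
    rw [integral_const_mul, Complex.integral_cpow_mul_exp_neg_mul_Ioi hs1 hl,
      Complex.Gamma_add_one s hs0, one_div, Complex.inv_cpow _ _ (by
        rw [Complex.arg_ofReal_of_nonneg hl.le]; exact Real.pi_pos.ne),
      ← Complex.cpow_neg, show -(s + 1) = -s - 1 by ring, Complex.cpow_sub _ _ hlc,
      Complex.cpow_one]
    field_simp
    ring
  · intro r _
    have : HasDerivAt (fun r : ℝ => Complex.exp (-((l : ℂ) * r)))
        (Complex.exp (-((l : ℂ) * r)) * -((l : ℂ) * 1)) r :=
      ((((hasDerivAt_id (r : ℂ)).comp_ofReal).const_mul (l : ℂ)).neg).cexp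
    exact (this.sub_const 1).congr_deriv (by ring)
  · intro r hr
    have := (hasDerivAt_ofReal_cpow_const (x := r) (ne_of_gt hr) hs0).div_const s
    rwa [mul_div_cancel_left₀ _ hs0] at this
  · exact kernel_integrable h1 h2 hl0
  · have h4 := (Complex.GammaIntegral_convergent hs1)
    have h5 : IntegrableOn (fun r : ℝ => (-(l : ℂ) / s) * (l : ℂ) ^ (-s) *
        ((fun x : ℝ => (((-x).exp : ℝ) : ℂ) * (x : ℂ) ^ (s + 1 - 1)) (l * r))) (Ioi 0) := by
      refine Integrable.const_mul ?_ _
      have := (integrableOn_Ioi_comp_mul_left_iff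
        (fun x : ℝ => (((-x).exp : ℝ) : ℂ) * (x : ℂ) ^ (s + 1 - 1)) 0 hl).mpr
        (by simpa using h4)
      exact this
    refine h5.congr_fun (fun r hr => ?_) measurableSet_Ioi
    simp only [Pi.mul_apply]
    rw [add_sub_cancel_right, Complex.ofReal_mul, Complex.mul_cpow_ofReal_nonneg hl.le (le_of_lt hr),
      Complex.cpow_neg]
    have : (l : ℂ) ^ s ≠ 0 := by simp [Complex.cpow_eq_zero_iff, hlc]
    push_cast
    field_simp
  · refine squeeze_zero_norm' (a := fun r : ℝ => 2 * max 1 l * r ^ (s.re + 1) / ‖s‖) ?_ ?_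
    · filter_upwards [self_mem_nhdsWithin] with r hr
      have hr : 0 < r := hr
      simp only [Pi.mul_apply]
      rw [norm_mul, norm_div, Complex.norm_cpow_eq_rpow_re_of_pos hr, Real.rpow_add_one hr.ne',
        ← mul_div_assoc]
      have := norm_exp_neg_mul_sub_one_le (l := (l : ℂ)) (L := max 1 l) (r := r) hl0
        (by rw [Complex.norm_real, Real.norm_of_nonneg hl.le]; exact le_max_right _ _)
        (le_max_left _ _) hr
      refine div_le_div_of_nonneg_right ?_ (norm_nonneg _)
      calc _ ≤ (2 * max 1 l * min 1 r) * r ^ s.re := by gcongr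
        _ ≤ (2 * max 1 l * r) * r ^ s.re := by gcongr; exact min_le_right _ _
        _ = _ := by ring
    · have h6 : Tendsto (fun r : ℝ => r ^ (s.re + 1)) (nhdsWithin 0 (Ioi 0)) (nhds 0) := by
        have := (Real.continuousAt_rpow_const 0 (s.re + 1) (Or.inr (by linarith))).tendsto
        rw [Real.zero_rpow (by linarith)] at this
        exact this.mono_left nhdsWithin_le_nhds
      simpa using (h6.const_mul (2 * max 1 l)).div_const ‖s‖
  · refine squeeze_zero_norm' (a := fun r : ℝ => 2 * max 1 l * r ^ (-(-s.re)) / ‖s‖) ?_ ?_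
    · filter_upwards [eventually_gt_atTop 0] with r hr
      simp only [Pi.mul_apply]
      rw [norm_mul, norm_div, Complex.norm_cpow_eq_rpow_re_of_pos hr, neg_neg, ← mul_div_assoc]
      have := norm_exp_neg_mul_sub_one_le (l := (l : ℂ)) (L := max 1 l) (r := r) hl0
        (by rw [Complex.norm_real, Real.norm_of_nonneg hl.le]; exact le_max_right _ _)
        (le_max_left _ _) hr
      gcongr
      refine this.trans ?_
      have h7 : (0 : ℝ) ≤ 2 * max 1 l := by positivity
      nlinarith [min_le_left 1 r]
    · have := tendsto_rpow_neg_atTop (y := -s.re) (by linarith)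
      simpa using (this.const_mul (2 * max 1 l)).div_const ‖s‖

lemma differentiableAt_integral_kernel {s : ℂ} (h1 : -1 < s.re) (h2 : s.re < 0) {l₀ : ℂ}
    (hl : 0 < l₀.re) :
    DifferentiableAt ℂ (fun l : ℂ => ∫ r : ℝ in Ioi 0,
      (Complex.exp (-(l * r)) - 1) * (r : ℂ) ^ (s - 1)) l₀ := by
  -- on the half-plane `d < l.re` the derivative in `l` is dominated by `exp (-d r) * r ^ s.re`
  set d := l₀.re / 2 with hd
  have hd0 : 0 < d := by positivity
  have hopen : {l : ℂ | d < l.re} ∈ nhds l₀ :=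
    (isOpen_lt continuous_const Complex.continuous_re).mem_nhds (by simp [hd]; linarith)
  have hint : IntegrableOn (fun r : ℝ => Real.exp (-(d * r)) * r ^ s.re) (Ioi 0) := by
    have h4 := Real.GammaIntegral_convergent (s := s.re + 1) (by linarith)
    have h5 := ((integrableOn_Ioi_comp_mul_left_iff
        (fun x : ℝ => Real.exp (-x) * x ^ (s.re + 1 - 1)) 0 hd0).mpr
        (by simpa using h4)).const_mul (d ^ (-s.re))
    refine IntegrableOn.congr_fun h5 (fun r hr => ?_) measurableSet_Ioi
    rw [add_sub_cancel_right, Real.mul_rpow hd0.le (le_of_lt hr), Real.rpow_neg hd0.le]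
    have := (Real.rpow_pos_of_pos hd0 s.re).ne'
    field_simp
  refine (hasDerivAt_integral_of_dominated_loc_of_deriv_le (𝕜 := ℂ)
    (μ := volume.restrict (Ioi (0 : ℝ)))
    (F' := fun l r => -(r : ℂ) * Complex.exp (-(l * r)) * (r : ℂ) ^ (s - 1)) (x₀ := l₀)
    (bound := fun r : ℝ => Real.exp (-(d * r)) * r ^ s.re) hopen
    (.of_forall fun l => (measurable_kernel s l).aestronglyMeasurable)
    (kernel_integrable h1 h2 hl.le) (by fun_prop) ?_ hint ?_).2.differentiableAt
  · filter_upwards [ae_restrict_mem measurableSet_Ioi] with r hr l hl'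
    have hr : 0 < r := hr
    have hl' : d < l.re := hl'
    rw [norm_mul, norm_mul, norm_neg, Complex.norm_real, Real.norm_of_nonneg hr.le,
      Complex.norm_cpow_eq_rpow_re_of_pos hr, Complex.norm_exp]
    simp only [Complex.neg_re, Complex.re_mul_ofReal, Complex.sub_re, Complex.one_re]
    rw [Real.rpow_sub_one hr.ne']
    have : r * Real.exp (-(l.re * r)) * (r ^ s.re / r) = Real.exp (-(l.re * r)) * r ^ s.re := by
      field_simp
    rw [this]
    gcongr
  · filter_upwards with r l _
    have : HasDerivAt (fun l : ℂ => Complex.exp (-(l * r)))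
        (Complex.exp (-(l * r)) * -(1 * (r : ℂ))) l :=
      (((hasDerivAt_id l).mul_const (r : ℂ)).neg).cexp
    exact ((this.sub_const 1).mul_const _).congr_deriv (by ring)

/-- The formula extends from `l > 0` to the right half-plane by the identity theorem, both sides
being analytic in `l`. -/
lemma integral_kernel_of_re_pos {s : ℂ} (h1 : -1 < s.re) (h2 : s.re < 0) {l : ℂ} (hl : 0 < l.re) :
    ∫ r : ℝ in Ioi 0, (Complex.exp (-(l * r)) - 1) * (r : ℂ) ^ (s - 1)
      = Complex.Gamma s * l ^ (-s) := by
  have hU : IsOpen {l : ℂ | 0 < l.re} := isOpen_lt continuous_const Complex.continuous_re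
  have hF : AnalyticOnNhd ℂ (fun l : ℂ => ∫ r : ℝ in Ioi 0,
      (Complex.exp (-(l * r)) - 1) * (r : ℂ) ^ (s - 1)) {l : ℂ | 0 < l.re} :=
    DifferentiableOn.analyticOnNhd
      (fun z hz => (differentiableAt_integral_kernel h1 h2 hz).differentiableWithinAt) hU
  have hG : AnalyticOnNhd ℂ (fun l : ℂ => Complex.Gamma s * l ^ (-s)) {l : ℂ | 0 < l.re} := by
    refine DifferentiableOn.analyticOnNhd (fun z hz => ?_) hU
    have hz' : z ∈ slitPlane := Or.inl hz
    exact ((differentiableAt_id.cpow_const hz').const_mul _).differentiableWithinAt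
  refine hF.eqOn_of_preconnected_of_frequently_eq hG
    (convex_halfSpace_re_gt 0).isPreconnected (z₀ := 1) (by simp) ?_ hl
  -- the two sides agree at the real points `1 + 1 / (n + 1)`, which accumulate at `1`
  have ht : Tendsto (fun n : ℕ => (((1 + 1 / ((n : ℝ) + 1) : ℝ)) : ℂ)) atTop
      (nhdsWithin 1 {1}ᶜ) := by
    rw [tendsto_nhdsWithin_iff]
    constructor
    · have := (tendsto_one_div_add_atTop_nhds_zero_nat (𝕜 := ℝ)).const_add 1
      rw [add_zero] at this
      exact_mod_cast (Complex.continuous_ofReal.tendsto _).comp this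
    · filter_upwards with n
      have : (1 + 1 / ((n : ℝ) + 1) : ℝ) ≠ 1 := by
        have : 0 < 1 / ((n : ℝ) + 1) := by positivity
        linarith
      simpa only [mem_compl_iff, mem_singleton_iff, Complex.ofReal_eq_one] using this
  refine ht.frequently (Frequently.of_forall fun n => ?_)
  exact integral_kernel_of_pos h1 h2 (by positivity)

/-- The boundary case `l = -i x` with `x ≠ 0`, as the limit of `l = 1 / (n + 1) - i x`. -/
lemma integral_kernel_imag {s : ℂ} (h1 : -1 < s.re) (h2 : s.re < 0) {x : ℝ} (hx : x ≠ 0) :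
    ∫ r : ℝ in Ioi 0, (Complex.exp (-((-Complex.I * x) * r)) - 1) * (r : ℂ) ^ (s - 1)
      = Complex.Gamma s * (-Complex.I * x) ^ (-s) := by
  have hl : Tendsto (fun n : ℕ => ((1 / ((n : ℝ) + 1) : ℝ) : ℂ) + (-Complex.I * x)) atTop
      (nhds (-Complex.I * x)) := by
    have := (Complex.continuous_ofReal.tendsto _).comp
      (tendsto_one_div_add_atTop_nhds_zero_nat (𝕜 := ℝ))
    simpa using! this.add_const (-Complex.I * x)
  have hre : ∀ n : ℕ, 0 < (((1 / ((n : ℝ) + 1) : ℝ) : ℂ) + (-Complex.I * x)).re := by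
    intro n
    have : 0 < 1 / ((n : ℝ) + 1) := by positivity
    rw [Complex.add_re, Complex.ofReal_re]
    simpa using this
  have hslit : (-Complex.I * x : ℂ) ∈ slitPlane := by
    right; simpa using hx
  have hR : Tendsto (fun n : ℕ => Complex.Gamma s *
      (((1 / ((n : ℝ) + 1) : ℝ) : ℂ) + (-Complex.I * x)) ^ (-s)) atTop
      (nhds (Complex.Gamma s * (-Complex.I * x) ^ (-s))) :=
    ((continuousAt_cpow_const hslit).tendsto.comp hl).const_mul _
  refine tendsto_nhds_unique ?_ hR
  simp_rw [← fun n => integral_kernel_of_re_pos h1 h2 (hre n)]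
  refine tendsto_integral_of_dominated_convergence
    (fun r => 2 * (1 + |x|) * kerBound s.re r)
    (fun n => (measurable_kernel s _).aestronglyMeasurable)
    ((kerBound_integrable h1 h2).const_mul _) (fun n => ?_) ?_
  · filter_upwards [ae_restrict_mem measurableSet_Ioi] with r hr
    refine norm_kernel_le (hre n).le ((norm_add_le _ _).trans ?_) (by simp) hr
    rw [Complex.norm_real, norm_mul, norm_neg, Complex.norm_I, Complex.norm_real,
      Real.norm_of_nonneg (by positivity), one_mul, Real.norm_eq_abs]
    gcongr
    rw [div_le_one (by positivity)]
    simp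
  · filter_upwards with r
    have hc : Continuous (fun l : ℂ => (Complex.exp (-(l * r)) - 1) * (r : ℂ) ^ (s - 1)) := by
      fun_prop
    exact (hc.tendsto _).comp hl

/-! ### Integrating a primitive against a measure on the half-line -/

lemma sigmaFinite_of_tails {φ : Measure ℝ} (h0 : φ (Iic 0) = 0)
    (hfin : ∀ r : ℝ, 0 < r → φ (Ioi r) ≠ ⊤) : SigmaFinite φ := by
  refine ⟨⟨⟨fun n : ℕ => Iic 0 ∪ Ioi (1 / ((n : ℝ) + 1)), fun _ => trivial, fun n => ?_, ?_⟩⟩⟩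
  · refine measure_union_lt_top (by simp [h0]) (hfin _ (by positivity)).lt_top
  · refine eq_univ_of_forall fun y => mem_iUnion.2 ?_
    rcases le_or_gt y 0 with hy | hy
    · exact ⟨0, Or.inl hy⟩
    · obtain ⟨n, hn⟩ := exists_nat_one_div_lt hy
      exact ⟨n, Or.inr hn⟩

/-- Fubini on the region `0 < r < y`: a primitive integrated against `φ` equals the integral of its
density against the tail `r ↦ φ (r, ∞)`. Only the tails with `r > 0` are assumed finite; the total mass
may be infinite because of the behaviour at `0`. -/
lemma integral_primitive_eq_integral_tail {φ : Measure ℝ} (h0 : φ (Iic 0) = 0)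
    (hfin : ∀ r : ℝ, 0 < r → φ (Ioi r) ≠ ⊤) {g : ℝ → ℂ} (hg : Measurable g)
    (hint : IntegrableOn (fun r => φ.real (Ioi r) * ‖g r‖) (Ioi 0)) :
    ∫ y, (∫ r in (0 : ℝ)..y, g r) ∂φ = ∫ r in Ioi 0, (φ.real (Ioi r) : ℂ) * g r := by
  have := sigmaFinite_of_tails h0 hfin
  have hms : MeasurableSet {p : ℝ × ℝ | p.2 < p.1} := measurableSet_lt measurable_snd measurable_fst
  have hind : ∀ r y : ℝ, {p : ℝ × ℝ | p.2 < p.1}.indicator (fun p => g p.2) (y, r)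
      = (Ioi r).indicator (fun _ => g r) y := by
    intro r y; simp [indicator]
  have hind' : ∀ y r : ℝ, {p : ℝ × ℝ | p.2 < p.1}.indicator (fun p => g p.2) (y, r)
      = (Iio y).indicator g r := by
    intro r y; simp [indicator]
  have hprod : Integrable ({p : ℝ × ℝ | p.2 < p.1}.indicator (fun p => g p.2))
      (φ.prod (volume.restrict (Ioi 0))) := by
    have hmeas : Measurable ({p : ℝ × ℝ | p.2 < p.1}.indicator (fun p => g p.2)) :=
      (hg.comp measurable_snd).indicator hms
    rw [integrable_prod_iff' hmeas.aestronglyMeasurable]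
    constructor
    · filter_upwards [ae_restrict_mem measurableSet_Ioi] with r hr
      simp_rw [hind]
      exact (integrable_indicator_iff measurableSet_Ioi).2 (integrableOn_const (hfin r hr))
    · simp_rw [hind, norm_indicator_eq_indicator_norm]
      simp_rw [integral_indicator measurableSet_Ioi, setIntegral_const, smul_eq_mul]
      exact hint
  have hswap := integral_integral_swap
    (f := fun y r => {p : ℝ × ℝ | p.2 < p.1}.indicator (fun p => g p.2) (y, r)) hprod
  -- `φ` does not charge `(-∞, 0]`, so only `y > 0` matters
  have hL : ∫ y, (∫ r in (0 : ℝ)..y, g r) ∂φ = ∫ y, (∫ r in Ioi 0,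
      {p : ℝ × ℝ | p.2 < p.1}.indicator (fun p => g p.2) (y, r)) ∂φ := by
    refine integral_congr_ae ?_
    have hpos : ∀ᵐ y ∂φ, 0 < y := by
      rw [ae_iff]
      simp only [not_lt]
      exact h0
    filter_upwards [hpos] with y hy
    simp_rw [hind']
    rw [setIntegral_indicator measurableSet_Iio, intervalIntegral.integral_of_le hy.le,
      integral_Ioc_eq_integral_Ioo, Ioi_inter_Iio]
  rw [hL, hswap]
  congr 1
  ext r
  simp_rw [hind]
  rw [integral_indicator measurableSet_Ioi, setIntegral_const, Complex.real_smul]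

/-! ### The stated formula -/

lemma integral_exp_sub_one (x y : ℝ) :
    ∫ r in (0 : ℝ)..y, (Complex.I * x) * (Complex.exp (-((-Complex.I * x) * r)) - 1)
      = Complex.exp (Complex.I * x * y) - 1 - Complex.I * x * y := by
  have hd : ∀ r : ℝ, HasDerivAt
      (fun r : ℝ => Complex.exp (Complex.I * x * r) - Complex.I * x * r)
      ((Complex.I * x) * (Complex.exp (-((-Complex.I * x) * r)) - 1)) r := by
    intro r
    have h1 : HasDerivAt (fun r : ℝ => Complex.I * x * (r : ℂ)) (Complex.I * x * 1) r :=
      ((hasDerivAt_id (r : ℂ)).comp_ofReal).const_mul _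
    refine (h1.cexp.sub h1).congr_deriv ?_
    rw [show -((-Complex.I * x) * r) = Complex.I * x * (r : ℂ) by ring]
    ring
  rw [intervalIntegral.integral_eq_sub_of_hasDerivAt (fun r _ => hd r)
    (Continuous.intervalIntegrable (by fun_prop) _ _)]
  simp
  ring

theorem stmt5 (c α : ℝ) (hc : 1 < c) (hα : α ∈ Set.Ioo (1 : ℝ) 2)
    (θ : ℝ → ℝ) (cfs : ℤ → ℂ) (hθ : IsSmoothAdmissible c α θ cfs)
    (ctil : ℝ) (hctil : ctil = 2 * Real.pi * α / Real.log c)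
    (φ₁ : Measure ℝ)
    (hφ : ∀ r : ℝ, 0 < r → φ₁ (Set.Ioi r) = ENNReal.ofReal (r ^ (-α) * θ (Real.log r)))
    (hφ0 : φ₁ (Set.Iic 0) = 0) (x : ℝ) :
    Summable (fun k : ℤ =>
      ‖cfs k * Complex.Gamma (Complex.I * (k : ℂ) * (ctil : ℂ) - (α : ℂ) + 1) *
        (-Complex.I * (x : ℂ)) ^ ((α : ℂ) - Complex.I * (k : ℂ) * (ctil : ℂ))‖) ∧
    ∫ y, (Complex.exp (Complex.I * (x : ℂ) * (y : ℂ)) - 1 - Complex.I * (x : ℂ) * (y : ℂ)) ∂φ₁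
      = -∑' k : ℤ, cfs k * Complex.Gamma (Complex.I * (k : ℂ) * (ctil : ℂ) - (α : ℂ) + 1) *
          (-Complex.I * (x : ℂ)) ^ ((α : ℂ) - Complex.I * (k : ℂ) * (ctil : ℂ)) := by
  obtain ⟨⟨hpos, -, -⟩, hcont, -, -, hsum, hser⟩ := hθ
  rw [← hctil] at hser
  obtain ⟨ha1, ha2⟩ := hα
  -- at `x = 0` both sides vanish, since `0 ^ z = 0` for `z ≠ 0`
  rcases eq_or_ne x 0 with rfl | hx
  · have hz : ∀ k : ℤ, (-Complex.I * ((0 : ℝ) : ℂ)) ^ ((α : ℂ) - Complex.I * k * ctil) = 0 := by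
      intro k
      rw [Complex.ofReal_zero, mul_zero, Complex.zero_cpow]
      intro h
      have := congrArg Complex.re h
      simp at this
      linarith
    simp_rw [hz]
    simp
  set s : ℤ → ℂ := fun k => Complex.I * k * ctil - α + 1 with hs
  have hsre : ∀ k, (s k).re = 1 - α := by
    intro k; simp [hs]; ring
  have hs1 : ∀ k, -1 < (s k).re := fun k => by rw [hsre]; linarith
  have hs2 : ∀ k, (s k).re < 0 := fun k => by rw [hsre]; linarith
  set l : ℂ := -Complex.I * x with hl
  have hl0 : l ≠ 0 := by simp [hl, hx]
  have hlre : 0 ≤ l.re := by simp [hl]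
  set L : ℝ := max 1 ‖l‖
  have hB := kerBound_integrable (a := 1 - α) (by linarith) (by linarith)
  set K : ℝ := ∫ r in Ioi 0, 2 * L * kerBound (1 - α) r with hK
  -- `s k` is the Mellin exponent of the `k`-th term; since `α - i k c̃ = 1 - s k`, each term is `l`
  -- times a Mellin integral
  have hterm : ∀ k : ℤ, cfs k * Complex.Gamma (s k) * l ^ ((α : ℂ) - Complex.I * k * ctil)
      = l * ∫ r : ℝ in Ioi 0, cfs k * ((Complex.exp (-(l * r)) - 1) * (r : ℂ) ^ (s k - 1)) := by
    intro k
    rw [integral_const_mul, integral_kernel_imag (hs1 k) (hs2 k) hx,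
      show (α : ℂ) - Complex.I * k * ctil = -(s k) + 1 by simp only [hs]; ring,
      Complex.cpow_add _ _ hl0, Complex.cpow_one]
    ring
  have hint : ∀ k : ℤ, IntegrableOn (fun r : ℝ =>
      cfs k * ((Complex.exp (-(l * r)) - 1) * (r : ℂ) ^ (s k - 1))) (Ioi 0) :=
    fun k => (kernel_integrable (hs1 k) (hs2 k) hlre).const_mul _
  -- the exponents `s k` share the real part `1 - α`, so the bound `K` does not depend on `k`;
  -- this gives the convergence of the series without asymptotics of `Γ`
  have hnorm : ∀ k : ℤ, ∫ r : ℝ in Ioi 0,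
      ‖cfs k * ((Complex.exp (-(l * r)) - 1) * (r : ℂ) ^ (s k - 1))‖ ≤ ‖cfs k‖ * K := by
    intro k
    rw [hK, ← integral_const_mul]
    refine setIntegral_mono_on (hint k).norm ((hB.const_mul _).const_mul _) measurableSet_Ioi
      fun r hr => ?_
    rw [norm_mul, ← hsre k]
    gcongr
    exact norm_kernel_le hlre (le_max_right _ _) (le_max_left _ _) hr
  have hsumnorm : Summable (fun k : ℤ => ∫ r : ℝ in Ioi 0,
      ‖cfs k * ((Complex.exp (-(l * r)) - 1) * (r : ℂ) ^ (s k - 1))‖) :=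
    Summable.of_nonneg_of_le (fun k => integral_nonneg fun r => norm_nonneg _) hnorm
      (hsum.mul_right K)
  have htail : ∀ r : ℝ, 0 < r → φ₁.real (Ioi r) = r ^ (-α) * θ (Real.log r) := by
    intro r hr
    rw [measureReal_def, hφ r hr, ENNReal.toReal_ofReal]
    exact mul_nonneg (Real.rpow_nonneg hr.le _) (hpos _).le
  -- the Fourier series of `θ` at `log r` turns the tail into a series of complex powers of `r`
  have hexp : ∀ r : ℝ, 0 < r → HasSum (fun k : ℤ =>
      cfs k * ((Complex.exp (-(l * r)) - 1) * (r : ℂ) ^ (s k - 1)))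
      ((φ₁.real (Ioi r) : ℂ) * (Complex.exp (-(l * r)) - 1)) := by
    intro r hr
    have hr0 : (r : ℂ) ≠ 0 := by exact_mod_cast hr.ne'
    have h1 := (hser (Real.log r)).mul_left ((r : ℂ) ^ (-(α : ℂ)) * (Complex.exp (-(l * r)) - 1))
    convert! h1 using 1
    · ext k
      rw [show s k - 1 = -(α : ℂ) + Complex.I * k * ctil by simp only [hs]; ring,
        Complex.cpow_add _ _ hr0, Complex.cpow_def_of_ne_zero hr0 (Complex.I * k * ctil),
        Complex.ofReal_log hr.le]
      ring_nf
    · rw [htail r hr]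
      push_cast
      rw [Complex.ofReal_cpow hr.le]
      push_cast
      ring
  set M : ℝ := ∑' k, ‖cfs k‖
  have hM : ∀ y, θ y ≤ M := by
    intro y
    have hn : ∀ k : ℤ, ‖cfs k * Complex.exp (Complex.I * k * ctil * y)‖ = ‖cfs k‖ := by
      intro k
      rw [norm_mul, Complex.norm_exp]
      simp
    have := norm_tsum_le_tsum_norm (f := fun k : ℤ =>
      cfs k * Complex.exp (Complex.I * k * ctil * y)) (by simpa only [hn] using hsum)
    rw [(hser y).tsum_eq, Complex.norm_real] at this
    simp_rw [hn] at this
    exact (le_abs_self _).trans this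
  have hgint : IntegrableOn (fun r => φ₁.real (Ioi r) *
      ‖(Complex.I * x) * (Complex.exp (-(l * r)) - 1)‖) (Ioi 0) := by
    have hmeas : Measurable fun r : ℝ => r ^ (-α) * θ (Real.log r) *
        ‖(Complex.I * x) * (Complex.exp (-(l * r)) - 1)‖ := by
      have := hcont.measurable
      fun_prop
    refine Integrable.mono' (hB.const_mul (M * |x| * (2 * L)))
      (hmeas.aestronglyMeasurable.congr ?_) ?_
    · filter_upwards [ae_restrict_mem measurableSet_Ioi] with r hr
      rw [htail r hr]
    · filter_upwards [ae_restrict_mem measurableSet_Ioi] with r hr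
      have hr : 0 < r := hr
      have h2 := norm_exp_neg_mul_sub_one_le (l := l) (L := L) hlre (le_max_right _ _)
        (le_max_left _ _) hr
      rw [htail r hr, norm_mul, norm_norm, norm_mul, norm_mul,
        norm_mul Complex.I, Complex.norm_I, one_mul,
        Complex.norm_real, Real.norm_eq_abs, Real.norm_eq_abs,
        Real.norm_eq_abs x, abs_of_pos (hpos _),
        abs_of_pos (Real.rpow_pos_of_pos hr _), kerBound, show 1 - α - 1 = -α by ring]
      have := hM (Real.log r)
      calc _ ≤ r ^ (-α) * M * (|x| * (2 * L * min 1 r)) := by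
            gcongr
        _ = _ := by ring
  refine ⟨?_, ?_⟩
  · refine Summable.of_nonneg_of_le (fun k => norm_nonneg _) (fun k => ?_)
      (hsumnorm.mul_left ‖l‖)
    have := hterm k
    simp only [hs] at this ⊢
    rw [this, norm_mul]
    gcongr
    exact norm_integral_le_integral_norm _
  · have hint2 := integral_primitive_eq_integral_tail hφ0 (fun r hr => by simp [hφ r hr])
      (g := fun r : ℝ => (Complex.I * x) * (Complex.exp (-(l * r)) - 1)) (by fun_prop) hgint
    simp_rw [hl, integral_exp_sub_one, ← hl] at hint2
    rw [hint2]
    have hS := hasSum_integral_of_summable_integral_norm hint hsumnorm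
    have hR : ∑' k : ℤ, cfs k * Complex.Gamma (s k) * l ^ ((α : ℂ) - Complex.I * k * ctil)
        = l * ∫ r in Ioi 0, (φ₁.real (Ioi r) : ℂ) * (Complex.exp (-(l * r)) - 1) := by
      simp_rw [hterm]
      rw [tsum_mul_left, hS.tsum_eq]
      congr 1
      exact setIntegral_congr_fun measurableSet_Ioi fun r hr => (hexp r hr).tsum_eq
    simp only [hs] at hR
    rw [hR, ← neg_mul, ← integral_const_mul]
    congr 1
    ext r
    simp only [hl]
    ring
end
end

section
/- Let c > 1, α ∈ (0,2)\{1}, and let θ be a smooth admissible function with respect to c and α with Fourier coefficients (c_k)_{k∈ℤ} and c̃ = 2πα/log c. Define d := ∑_{k∈ℤ} c_k Γ(i k c̃ − α + 1) cos( (π/2)(i k c̃ − α + 1) ). Then d = ∫₀^∞ cos(x) x^{−α} θ(log x) dx if α ∈ (0,1) (as an improper Riemann integral), and d = ∫₀^∞ (cos(x) − 1) x^{−α} θ(log x) dx if α ∈ (1,2); in particular d is real. -/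
/-!
The Fourier series of `θ` turns the integrals into series of Mellin transforms: for `x > 0`,
`x ^ (-α) * exp (I k c̃ log x) = x ^ (s_k - 1)` with `s_k = I k c̃ - α + 1`, and
`∫ cos x * x ^ (s - 1) = Γ(s) cos(π s / 2)` for `0 < re s < 1` (improper integral), with `cos x - 1`
in place of `cos x` when `-1 < re s < 0` (absolutely convergent integral).

*Mellin transforms.* For `re r > 0`, `∫ x ^ (a - 1) e ^ (-r x) = r ^ (-a) Γ(a)` follows from the case
of real `r` by the identity theorem. One integration by parts gives
`∫ (e ^ (-r x) - 1) x ^ (s - 1) = r ^ (-s) Γ(s)` for `-1 < re s < 0`, and dominated convergence extends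
this to `r = ±I` (`integral_exp_sub_one_mul_cpow_of_nonneg`). The transforms of `cos x - 1` and `sin x`
follow, and integrating `cos` by parts reduces `0 < re s < 1` to that of `sin` at `s - 1`
(`tendsto_integral_Ioc_cos_mul_cpow`).

*Interchange with the series.* On sets where `g x * x ^ (-α)` is integrable, summability of the
coefficients is enough (`hasSum_setIntegral_mul`). This settles `1 < α` directly, and `α < 1` on each
`(0, b]`. To let `b → ∞`, the truncated transforms are bounded uniformly in `b` by a constant times
`(1 + |im s|) ^ (1 - α)` (`norm_integral_Ioc_cos_mul_cpow_le`). Against coefficients `O(1 / k ^ 2)`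
this leaves the summable majorant `|k| ^ (-(1 + α))`, so dominated convergence for series applies.
Since `d` is thereby equal to, or a limit of, real numbers, it is real.
-/

open MeasureTheory Real Filter Set Complex

noncomputable section

/-! ### Exponential Mellin transforms -/

lemma norm_exp_neg_mul_sub_one_le_s10 {r : ℂ} (hr : 0 ≤ r.re) {x : ℝ} (hx : 0 < x) :
    ‖Complex.exp (-(r * x)) - 1‖ ≤ min 2 (2 * ‖r‖ * x) := by
  have h2 : ‖Complex.exp (-(r * x)) - 1‖ ≤ 2 := by
    refine (norm_sub_le _ _).trans ?_
    rw [Complex.norm_exp]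
    have : Real.exp (-(r * x)).re ≤ 1 := by
      rw [Real.exp_le_one_iff]
      simp
      positivity
    simp only [norm_one]
    linarith
  refine le_min h2 ?_
  have hn : ‖-(r * x)‖ = ‖r‖ * x := by
    rw [norm_neg, norm_mul, Complex.norm_real, Real.norm_of_nonneg hx.le]
  rcases le_or_gt ‖-(r * x)‖ 1 with h | h
  · have := Complex.norm_exp_sub_one_le h
    rw [hn] at this
    linarith
  · rw [hn] at h
    linarith

lemma integrableOn_min_mul_rpow {σ : ℝ} (h1 : -1 < σ) (h0 : σ < 0) (R : ℝ) (hR : 0 ≤ R) :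
    IntegrableOn (fun x : ℝ => min 2 (R * x) * x ^ (σ - 1)) (Ioi 0) := by
  have := mellin_convergent_of_isBigO_scalar (a := 0) (b := -1) (s := σ)
    (f := fun x : ℝ => min 2 (R * x)) ?_ ?_ h0 ?_ h1
  · simpa only [mul_comm] using this
  · exact (by fun_prop : Continuous fun x : ℝ => min 2 (R * x)).continuousOn.locallyIntegrableOn
      measurableSet_Ioi
  · refine Asymptotics.IsBigO.of_bound 2 ?_
    filter_upwards [eventually_gt_atTop 0] with x hx
    have : 0 ≤ min 2 (R * x) := le_min (by norm_num) (by positivity)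
    rw [Real.norm_of_nonneg this]
    simp
  · refine Asymptotics.IsBigO.of_bound R ?_
    filter_upwards [self_mem_nhdsWithin] with x hx
    have hx : 0 < x := hx
    have : 0 ≤ min 2 (R * x) := le_min (by norm_num) (by positivity)
    rw [Real.norm_of_nonneg this]
    simp only [neg_neg, Real.rpow_one, Real.norm_of_nonneg hx.le]
    exact min_le_right _ _

lemma integrableOn_cpow_mul_exp {a r : ℂ} (ha : 0 < a.re) (hr : 0 < r.re) :
    IntegrableOn (fun x : ℝ => (x : ℂ) ^ (a - 1) * Complex.exp (-(r * x))) (Ioi 0) := by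
  have := integrableOn_rpow_mul_exp_neg_mul_rpow (p := 1) (s := a.re - 1) (b := r.re)
    (by linarith) one_pos hr
  refine Integrable.mono' this (by fun_prop) ?_
  filter_upwards [ae_restrict_mem measurableSet_Ioi] with x hx
  have hx : 0 < x := hx
  rw [norm_mul, Complex.norm_cpow_eq_rpow_re_of_pos hx, Complex.norm_exp]
  simp

lemma hasDerivAt_integral_cpow_mul_exp {a r : ℂ} (ha : 0 < a.re) (hr : 0 < r.re) :
    HasDerivAt (fun r : ℂ => ∫ x in Ioi (0 : ℝ), (x : ℂ) ^ (a - 1) * Complex.exp (-(r * x)))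
      (∫ x in Ioi (0 : ℝ), (x : ℂ) ^ (a - 1) * (Complex.exp (-(r * x)) * (-x))) r := by
  have hs : {z : ℂ | r.re / 2 < z.re} ∈ nhds r :=
    (isOpen_lt continuous_const Complex.continuous_re).mem_nhds (by simp; linarith)
  refine (hasDerivAt_integral_of_dominated_loc_of_deriv_le (μ := volume.restrict (Ioi (0 : ℝ)))
    (F := fun (z : ℂ) (x : ℝ) => (x : ℂ) ^ (a - 1) * Complex.exp (-(z * x)))
    (F' := fun (z : ℂ) (x : ℝ) => (x : ℂ) ^ (a - 1) * (Complex.exp (-(z * x)) * (-x)))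
    (bound := fun x : ℝ => x ^ a.re * Real.exp (-(r.re / 2) * x ^ (1 : ℝ))) hs
    (Eventually.of_forall fun z => by fun_prop) (integrableOn_cpow_mul_exp ha hr) (by fun_prop)
    ?_ ?_ ?_).2
  · filter_upwards [ae_restrict_mem measurableSet_Ioi] with x hx z hz
    have hx : 0 < x := hx
    have hz : r.re / 2 < z.re := hz
    rw [norm_mul, norm_mul, Complex.norm_cpow_eq_rpow_re_of_pos hx, Complex.norm_exp, norm_neg,
      Complex.norm_real, Real.norm_of_nonneg hx.le]
    have : x ^ a.re = x ^ (a - 1).re * x := by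
      rw [← Real.rpow_add_one hx.ne']; simp
    rw [this, mul_comm (Real.exp _) x, ← mul_assoc]
    gcongr
    simp
    nlinarith
  · exact integrableOn_rpow_mul_exp_neg_mul_rpow (by linarith) one_pos (by linarith)
  · refine Eventually.of_forall fun x z _ => ?_
    refine HasDerivAt.const_mul _ ?_
    have h : HasDerivAt (fun z : ℂ => -(z * x)) (-(x : ℂ)) z := by
      simpa using ((hasDerivAt_id z).mul_const (x : ℂ)).fun_neg
    exact h.cexp

/-- Mathlib has this for real `r`; both sides are holomorphic in `r`, so the identity theorem
extends it to the right half-plane. -/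
lemma integral_cpow_mul_exp_neg_mul_complex {a r : ℂ} (ha : 0 < a.re) (hr : 0 < r.re) :
    ∫ x in Ioi (0 : ℝ), (x : ℂ) ^ (a - 1) * Complex.exp (-(r * x))
      = (1 / r) ^ a * Complex.Gamma a := by
  have hopen : IsOpen {z : ℂ | 0 < z.re} := isOpen_lt continuous_const Complex.continuous_re
  have hslit : ∀ z : ℂ, 0 < z.re → 1 / z ∈ Complex.slitPlane := by
    intro z hz
    left
    rw [one_div, Complex.inv_re]
    have : 0 < Complex.normSq z := Complex.normSq_pos.2 (by rintro rfl; simp at hz)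
    positivity
  have hL : AnalyticOnNhd ℂ
      (fun r : ℂ => ∫ x in Ioi (0 : ℝ), (x : ℂ) ^ (a - 1) * Complex.exp (-(r * x)))
      {z : ℂ | 0 < z.re} :=
    DifferentiableOn.analyticOnNhd (fun z hz =>
      (hasDerivAt_integral_cpow_mul_exp ha hz).differentiableAt.differentiableWithinAt) hopen
  have hR : AnalyticOnNhd ℂ (fun r : ℂ => (1 / r) ^ a * Complex.Gamma a) {z : ℂ | 0 < z.re} := by
    refine DifferentiableOn.analyticOnNhd (fun z hz => ?_) hopen
    have hz0 : z ≠ 0 := by rintro rfl; simp at hz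
    have h1 : DifferentiableAt ℂ (fun r : ℂ => 1 / r) z := by fun_prop (disch := assumption)
    exact ((h1.cpow_const (hslit z hz)).mul_const _).differentiableWithinAt
  refine hL.eqOn_of_preconnected_of_frequently_eq hR
    (convex_halfSpace_re_gt 0).isPreconnected (z₀ := 1) (by simp) ?_ hr
  have ht : Tendsto (fun t : ℝ => (t : ℂ)) (nhdsWithin 1 {1}ᶜ) (nhdsWithin 1 {1}ᶜ) := by
    refine tendsto_nhdsWithin_iff.2 ⟨?_, ?_⟩
    · exact (Complex.continuous_ofReal.tendsto' 1 1 (by simp)).mono_left nhdsWithin_le_nhds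
    · filter_upwards [self_mem_nhdsWithin] with t ht
      simpa using ht
  refine ht.frequently (Eventually.frequently ?_)
  filter_upwards [nhdsWithin_le_nhds (eventually_gt_nhds (zero_lt_one (α := ℝ)))] with t ht
  exact Complex.integral_cpow_mul_exp_neg_mul_Ioi ha ht

lemma integrableOn_exp_sub_one_mul_cpow {s r : ℂ} (h1 : -1 < s.re) (h0 : s.re < 0)
    (hr : 0 ≤ r.re) :
    IntegrableOn (fun x : ℝ => (Complex.exp (-(r * x)) - 1) * (x : ℂ) ^ (s - 1)) (Ioi 0) := by
  refine Integrable.mono' (integrableOn_min_mul_rpow h1 h0 (2 * ‖r‖) (by positivity))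
    (by fun_prop) ?_
  filter_upwards [ae_restrict_mem measurableSet_Ioi] with x hx
  have hx : 0 < x := hx
  rw [norm_mul, Complex.norm_cpow_eq_rpow_re_of_pos hx]
  simp only [Complex.sub_re, Complex.one_re]
  gcongr
  exact norm_exp_neg_mul_sub_one_le_s10 hr hx

/-- Integration by parts against the antiderivative `x ^ s / s` of `x ^ (s - 1)`: subtracting `1` makes
the boundary term at `0` vanish and the integral converge for `-1 < re s < 0`. -/
lemma integral_exp_sub_one_mul_cpow {s r : ℂ} (h1 : -1 < s.re) (h0 : s.re < 0)
    (hr : 0 < r.re) :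
    ∫ x in Ioi (0 : ℝ), (Complex.exp (-(r * x)) - 1) * (x : ℂ) ^ (s - 1)
      = (1 / r) ^ s * Complex.Gamma s := by
  have hs0 : s ≠ 0 := by rintro rfl; simp at h0
  have hr0 : r ≠ 0 := by rintro rfl; simp at hr
  have hsr : 0 < (s + 1).re := by simp; linarith
  have hint := integrableOn_cpow_mul_exp hsr hr
  have hbd : ∀ x : ℝ, 0 < x → ‖(Complex.exp (-(r * x)) - 1) * ((x : ℂ) ^ s / s)‖ ≤
      min 2 (2 * ‖r‖ * x) * (x ^ s.re / ‖s‖) := by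
    intro x hx
    rw [norm_mul, norm_div, Complex.norm_cpow_eq_rpow_re_of_pos hx]
    gcongr
    exact norm_exp_neg_mul_sub_one_le_s10 hr.le hx
  have key := integral_Ioi_mul_deriv_eq_deriv_mul (a := 0) (a' := (0 : ℂ)) (b' := 0)
    (u := fun x : ℝ => Complex.exp (-(r * x)) - 1) (v := fun x : ℝ => (x : ℂ) ^ s / s)
    (u' := fun x : ℝ => Complex.exp (-(r * x)) * (-r)) (v' := fun x : ℝ => (x : ℂ) ^ (s - 1))
    ?_ ?_ (integrableOn_exp_sub_one_mul_cpow h1 h0 hr.le) ?_ ?_ ?_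
  · rw [key]
    have : ∀ x : ℝ, Complex.exp (-(r * x)) * (-r) * ((x : ℂ) ^ s / s) =
        (-(r / s)) * ((x : ℂ) ^ (s + 1 - 1) * Complex.exp (-(r * x))) := by
      intro x
      rw [add_sub_cancel_right]; ring
    simp_rw [this]
    rw [integral_const_mul, integral_cpow_mul_exp_neg_mul_complex hsr hr,
      Complex.Gamma_add_one _ hs0, Complex.cpow_add _ _ (one_div_ne_zero hr0), Complex.cpow_one]
    field_simp
    ring
  · intro x _
    have h : HasDerivAt (fun x : ℝ => -(r * (x : ℂ))) (-r) x := by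
      simpa using ((hasDerivAt_id x).ofReal_comp.const_mul r).fun_neg
    exact h.cexp.sub_const 1
  · intro x hx
    have := (hasDerivAt_ofReal_cpow_const (ne_of_gt hx) hs0).div_const s
    rwa [mul_div_cancel_left₀ _ hs0] at this
  · refine (hint.const_mul (-(r / s))).congr (Eventually.of_forall fun x => ?_)
    simp only [Pi.mul_apply, add_sub_cancel_right]
    ring
  · refine squeeze_zero_norm' (a := fun x : ℝ => 2 * ‖r‖ * x ^ (s.re + 1) / ‖s‖) ?_ ?_
    · filter_upwards [self_mem_nhdsWithin] with x hx
      have hx : 0 < x := hx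
      refine (hbd x hx).trans ?_
      rw [Real.rpow_add_one hx.ne']
      calc _ ≤ (2 * ‖r‖ * x) * (x ^ s.re / ‖s‖) := by gcongr; exact min_le_right _ _
        _ = _ := by ring
    · have : Continuous fun x : ℝ => 2 * ‖r‖ * x ^ (s.re + 1) / ‖s‖ := by
        have := Real.continuous_rpow_const (q := s.re + 1) (by linarith)
        fun_prop
      refine (this.tendsto' 0 0 ?_).mono_left nhdsWithin_le_nhds
      rw [Real.zero_rpow (by linarith)]; simp
  · refine squeeze_zero_norm' (a := fun x : ℝ => 2 * (x ^ (-(-s.re)) / ‖s‖)) ?_ ?_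
    · filter_upwards [eventually_gt_atTop 0] with x hx
      refine (hbd x hx).trans ?_
      rw [neg_neg]
      gcongr
      exact min_le_left _ _
    · simpa using ((tendsto_rpow_neg_atTop (y := -s.re) (by linarith)).div_const ‖s‖).const_mul 2

/-- Extension of `integral_exp_sub_one_mul_cpow` to the imaginary axis minus the origin, by dominated
convergence along `r + ε`, `ε → 0+`. -/
lemma integral_exp_sub_one_mul_cpow_of_nonneg {s r : ℂ} (h1 : -1 < s.re) (h0 : s.re < 0)
    (hr : 0 ≤ r.re) (hs : 1 / r ∈ Complex.slitPlane) :
    ∫ x in Ioi (0 : ℝ), (Complex.exp (-(r * x)) - 1) * (x : ℂ) ^ (s - 1)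
      = (1 / r) ^ s * Complex.Gamma s := by
  have hr0 : r ≠ 0 := by rintro rfl; simp at hs
  have hpath : Tendsto (fun ε : ℝ => r + ε) (nhdsWithin 0 (Ioi 0)) (nhds r) := by
    have : Continuous fun ε : ℝ => r + (ε : ℂ) := by fun_prop
    exact (this.tendsto' 0 r (by simp)).mono_left nhdsWithin_le_nhds
  have hlhs : Tendsto (fun ε : ℝ => ∫ x in Ioi (0 : ℝ),
      (Complex.exp (-((r + ε) * x)) - 1) * (x : ℂ) ^ (s - 1)) (nhdsWithin 0 (Ioi 0))
      (nhds (∫ x in Ioi (0 : ℝ), (Complex.exp (-(r * x)) - 1) * (x : ℂ) ^ (s - 1))) := by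
    refine tendsto_integral_filter_of_dominated_convergence
      (fun x : ℝ => min 2 (2 * (‖r‖ + 1) * x) * x ^ (s.re - 1))
      (Eventually.of_forall fun ε => by fun_prop) ?_
      (integrableOn_min_mul_rpow h1 h0 _ (by positivity)) ?_
    · filter_upwards [Ioc_mem_nhdsGT (zero_lt_one (α := ℝ))] with ε hε
      filter_upwards [ae_restrict_mem measurableSet_Ioi] with x hx
      have hx : 0 < x := hx
      have hre : 0 ≤ (r + ε).re := by simp; linarith [hε.1]
      have hn : ‖r + ε‖ ≤ ‖r‖ + 1 := by
        refine (norm_add_le _ _).trans ?_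
        rw [Complex.norm_real, Real.norm_of_nonneg hε.1.le]
        linarith [hε.2]
      rw [norm_mul, Complex.norm_cpow_eq_rpow_re_of_pos hx]
      simp only [Complex.sub_re, Complex.one_re]
      gcongr
      refine (norm_exp_neg_mul_sub_one_le_s10 hre hx).trans ?_
      gcongr
    · refine Eventually.of_forall fun x => ?_
      have : Continuous fun z : ℂ => (Complex.exp (-(z * x)) - 1) * (x : ℂ) ^ (s - 1) := by
        fun_prop
      exact (this.tendsto r).comp hpath
  have hrhs : Tendsto (fun ε : ℝ => (1 / (r + ε)) ^ s * Complex.Gamma s)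
      (nhdsWithin 0 (Ioi 0)) (nhds ((1 / r) ^ s * Complex.Gamma s)) := by
    have hc : ContinuousAt (fun z : ℂ => 1 / z) r := by fun_prop (disch := assumption)
    have : ContinuousAt (fun z : ℂ => (1 / z) ^ s * Complex.Gamma s) r :=
      (hc.cpow continuousAt_const hs).mul continuousAt_const
    exact this.tendsto.comp hpath
  refine tendsto_nhds_unique (hlhs.congr' ?_) hrhs
  filter_upwards [self_mem_nhdsWithin] with ε hε
  have hε : 0 < ε := hε
  exact integral_exp_sub_one_mul_cpow h1 h0 (by simp; linarith)

/-! ### Mellin transforms of the cosine and the sine -/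

lemma integral_expI_sub_one {s : ℂ} (h1 : -1 < s.re) (h0 : s.re < 0) :
    ∫ x in Ioi (0 : ℝ), (Complex.exp (x * I) - 1) * (x : ℂ) ^ (s - 1)
      = Complex.exp (Real.pi / 2 * s * I) * Complex.Gamma s := by
  have h := integral_exp_sub_one_mul_cpow_of_nonneg (r := -I) h1 h0 (by simp)
    (by right; simp)
  have hI : (1 : ℂ) / -I = I := by field_simp; simp
  rw [hI, Complex.cpow_def_of_ne_zero Complex.I_ne_zero, Complex.log_I] at h
  simp_rw [show ∀ x : ℝ, -(-I * (x : ℂ)) = x * I from fun x => by ring] at h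
  rw [h, mul_right_comm]

lemma integral_expNegI_sub_one {s : ℂ} (h1 : -1 < s.re) (h0 : s.re < 0) :
    ∫ x in Ioi (0 : ℝ), (Complex.exp (-x * I) - 1) * (x : ℂ) ^ (s - 1)
      = Complex.exp (-(Real.pi / 2 * s) * I) * Complex.Gamma s := by
  have h := integral_exp_sub_one_mul_cpow_of_nonneg (r := I) h1 h0 (by simp)
    (by right; simp)
  have hI : (1 : ℂ) / I = -I := by simp
  rw [hI, Complex.cpow_def_of_ne_zero (by simp), Complex.log_neg_I] at h
  simp_rw [show ∀ x : ℝ, -(I * (x : ℂ)) = -x * I from fun x => by ring] at h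
  rw [h, show -(Real.pi / 2 * s) * I = -(Real.pi / 2 : ℂ) * I * s by ring]

lemma integrableOn_expI_sub_one {s : ℂ} (h1 : -1 < s.re) (h0 : s.re < 0) :
    IntegrableOn (fun x : ℝ => (Complex.exp (x * I) - 1) * (x : ℂ) ^ (s - 1)) (Ioi 0) := by
  convert integrableOn_exp_sub_one_mul_cpow (r := -I) h1 h0 (by simp) using 5
  ring

lemma integrableOn_expNegI_sub_one {s : ℂ} (h1 : -1 < s.re) (h0 : s.re < 0) :
    IntegrableOn (fun x : ℝ => (Complex.exp (-x * I) - 1) * (x : ℂ) ^ (s - 1)) (Ioi 0) := by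
  convert integrableOn_exp_sub_one_mul_cpow (r := I) h1 h0 (by simp) using 5
  ring

lemma cos_sub_one_mul_eq (s : ℂ) (x : ℝ) :
    ((Real.cos x - 1 : ℝ) : ℂ) * (x : ℂ) ^ (s - 1) =
      (1 / 2) * ((Complex.exp (x * I) - 1) * (x : ℂ) ^ (s - 1) +
        (Complex.exp (-x * I) - 1) * (x : ℂ) ^ (s - 1)) := by
  push_cast
  rw [Complex.cos]
  ring

lemma sin_mul_eq (s : ℂ) (x : ℝ) :
    ((Real.sin x : ℝ) : ℂ) * (x : ℂ) ^ (s - 1) =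
      (-I / 2) * ((Complex.exp (x * I) - 1) * (x : ℂ) ^ (s - 1) -
        (Complex.exp (-x * I) - 1) * (x : ℂ) ^ (s - 1)) := by
  push_cast
  rw [Complex.sin]
  ring

lemma integrableOn_cos_sub_one_mul_cpow {s : ℂ} (h1 : -1 < s.re) (h0 : s.re < 0) :
    IntegrableOn (fun x : ℝ => ((Real.cos x - 1 : ℝ) : ℂ) * (x : ℂ) ^ (s - 1)) (Ioi 0) := by
  simp_rw [cos_sub_one_mul_eq]
  exact ((integrableOn_expI_sub_one h1 h0).add (integrableOn_expNegI_sub_one h1 h0)).const_mul _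

lemma integrableOn_sin_mul_cpow {s : ℂ} (h1 : -1 < s.re) (h0 : s.re < 0) :
    IntegrableOn (fun x : ℝ => ((Real.sin x : ℝ) : ℂ) * (x : ℂ) ^ (s - 1)) (Ioi 0) := by
  simp_rw [sin_mul_eq]
  exact ((integrableOn_expI_sub_one h1 h0).sub (integrableOn_expNegI_sub_one h1 h0)).const_mul _

/-- The Mellin transform of `cos x - 1` in the strip `-1 < re s < 0`. -/
lemma integral_cos_sub_one_mul_cpow {s : ℂ} (h1 : -1 < s.re) (h0 : s.re < 0) :
    ∫ x in Ioi (0 : ℝ), ((Real.cos x - 1 : ℝ) : ℂ) * (x : ℂ) ^ (s - 1)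
      = Complex.Gamma s * Complex.cos (Real.pi / 2 * s) := by
  simp_rw [cos_sub_one_mul_eq]
  rw [integral_const_mul, integral_add (integrableOn_expI_sub_one h1 h0)
    (integrableOn_expNegI_sub_one h1 h0), integral_expI_sub_one h1 h0,
    integral_expNegI_sub_one h1 h0, Complex.cos]
  ring

/-- The Mellin transform of `sin` in the strip `-1 < re s < 0`, where it converges absolutely. -/
lemma integral_sin_mul_cpow {s : ℂ} (h1 : -1 < s.re) (h0 : s.re < 0) :
    ∫ x in Ioi (0 : ℝ), ((Real.sin x : ℝ) : ℂ) * (x : ℂ) ^ (s - 1)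
      = Complex.Gamma s * Complex.sin (Real.pi / 2 * s) := by
  simp_rw [sin_mul_eq]
  rw [integral_const_mul, integral_sub (integrableOn_expI_sub_one h1 h0)
    (integrableOn_expNegI_sub_one h1 h0), integral_expI_sub_one h1 h0,
    integral_expNegI_sub_one h1 h0, Complex.sin]
  ring

/-! ### The truncated Mellin transform of the cosine -/

lemma integrableOn_Ioc_rpow_sub_one {σ : ℝ} (h0 : 0 < σ) {b : ℝ} (hb : 0 ≤ b) :
    IntegrableOn (fun x : ℝ => x ^ (σ - 1)) (Ioc 0 b) :=
  (intervalIntegrable_iff_integrableOn_Ioc_of_le hb).1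
    (intervalIntegral.intervalIntegrable_rpow' (by linarith))

lemma norm_cos_mul_cpow_le (s : ℂ) {x : ℝ} (hx : 0 < x) :
    ‖((Real.cos x : ℝ) : ℂ) * (x : ℂ) ^ (s - 1)‖ ≤ x ^ (s.re - 1) := by
  rw [norm_mul, Complex.norm_cpow_eq_rpow_re_of_pos hx, Complex.norm_real]
  simp only [Complex.sub_re, Complex.one_re]
  exact mul_le_of_le_one_left (by positivity) (Real.abs_cos_le_one x)

lemma integrableOn_cos_mul_cpow {s : ℂ} (h0 : 0 < s.re) {b : ℝ} (hb : 0 ≤ b) :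
    IntegrableOn (fun x : ℝ => ((Real.cos x : ℝ) : ℂ) * (x : ℂ) ^ (s - 1)) (Ioc 0 b) := by
  refine Integrable.mono' (integrableOn_Ioc_rpow_sub_one h0 hb) (by fun_prop) ?_
  filter_upwards [ae_restrict_mem measurableSet_Ioc] with x hx
  exact norm_cos_mul_cpow_le s hx.1

/-- Integration by parts on `(0, b]` (the boundary term at `0` vanishes since `re s > 0`), which moves the exponent to the strip where the transform of `sin`
converges absolutely. -/
lemma integral_Ioc_cos_mul_cpow {s : ℂ} (h0 : 0 < s.re) (h1 : s.re < 1) {b : ℝ} (hb : 0 < b) :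
    ∫ x in Ioc (0 : ℝ) b, ((Real.cos x : ℝ) : ℂ) * (x : ℂ) ^ (s - 1) =
      ((Real.sin b : ℝ) : ℂ) * (b : ℂ) ^ (s - 1) -
        (s - 1) * ∫ x in Ioc (0 : ℝ) b, ((Real.sin x : ℝ) : ℂ) * (x : ℂ) ^ (s - 1 - 1) := by
  have hs1 : s - 1 ≠ 0 := by
    intro h
    rw [sub_eq_zero] at h
    rw [h] at h1
    simp at h1
  have hc := integrableOn_cos_mul_cpow h0 hb.le
  have hsin : IntegrableOn
      (fun x : ℝ => ((Real.sin x : ℝ) : ℂ) * (x : ℂ) ^ (s - 1 - 1)) (Ioc 0 b) :=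
    (integrableOn_sin_mul_cpow (s := s - 1) (by simpa using h0) (by simpa using h1)).mono_set
      Ioc_subset_Ioi_self
  have hder : ∀ x : ℝ, 0 < x → HasDerivAt (fun x : ℝ => ((Real.sin x : ℝ) : ℂ) * (x : ℂ) ^ (s - 1))
      (((Real.cos x : ℝ) : ℂ) * (x : ℂ) ^ (s - 1) +
        (s - 1) * (((Real.sin x : ℝ) : ℂ) * (x : ℂ) ^ (s - 1 - 1))) x := by
    intro x hx
    convert! (Real.hasDerivAt_sin x).ofReal_comp.mul (hasDerivAt_ofReal_cpow_const hx.ne' hs1)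
      using 1
    ring
  have key := intervalIntegral.integral_eq_sub_of_hasDerivAt_of_tendsto hb
    (fa := 0) (fb := ((Real.sin b : ℝ) : ℂ) * (b : ℂ) ^ (s - 1))
    (fun x hx => hder x hx.1)
    ((intervalIntegrable_iff_integrableOn_Ioc_of_le hb.le).2 (hc.add (hsin.const_mul _))) ?_
    ((hder b hb).continuousAt.tendsto.mono_left nhdsWithin_le_nhds)
  · rw [intervalIntegral.integral_of_le hb.le, integral_add hc (hsin.const_mul _),
      integral_const_mul, sub_zero] at key
    rw [← key]
    ring
  · refine squeeze_zero_norm' (a := fun x : ℝ => x ^ s.re) ?_ ?_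
    · filter_upwards [self_mem_nhdsWithin] with x hx
      have hx : 0 < x := hx
      rw [norm_mul, Complex.norm_cpow_eq_rpow_re_of_pos hx, Complex.norm_real]
      have h : ‖Real.sin x‖ ≤ x := by
        simpa [abs_of_pos hx] using Real.abs_sin_le_abs (x := x)
      calc _ ≤ x * x ^ (s - 1).re := by gcongr
        _ = x ^ s.re := by
          rw [mul_comm, ← Real.rpow_add_one hx.ne']
          simp
    · refine ((Real.continuous_rpow_const h0.le).tendsto' 0 0 ?_).mono_left nhdsWithin_le_nhds
      exact Real.zero_rpow h0.ne'

/-- The Mellin transform of `cos` in the strip `0 < re s < 1`, as an improper integral. -/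
lemma tendsto_integral_Ioc_cos_mul_cpow {s : ℂ} (h0 : 0 < s.re) (h1 : s.re < 1) :
    Tendsto (fun b : ℝ => ∫ x in Ioc (0 : ℝ) b, ((Real.cos x : ℝ) : ℂ) * (x : ℂ) ^ (s - 1)) atTop
      (nhds (Complex.Gamma s * Complex.cos (Real.pi / 2 * s))) := by
  have hs1 : s - 1 ≠ 0 := by
    intro h
    rw [sub_eq_zero] at h
    rw [h] at h1
    simp at h1
  have hm1 : -1 < (s - 1).re := by simpa using h0
  have hm0 : (s - 1).re < 0 := by simpa using h1
  have hI : Tendsto (fun b : ℝ => ∫ x in Ioc (0 : ℝ) b,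
      ((Real.sin x : ℝ) : ℂ) * (x : ℂ) ^ (s - 1 - 1)) atTop
      (nhds (Complex.Gamma (s - 1) * Complex.sin (Real.pi / 2 * (s - 1)))) := by
    rw [← integral_sin_mul_cpow hm1 hm0]
    refine (intervalIntegral_tendsto_integral_Ioi 0 (integrableOn_sin_mul_cpow hm1 hm0)
      tendsto_id).congr' ?_
    filter_upwards [eventually_ge_atTop 0] with b hb
    exact intervalIntegral.integral_of_le hb
  have hB : Tendsto (fun b : ℝ => ((Real.sin b : ℝ) : ℂ) * (b : ℂ) ^ (s - 1)) atTop (nhds 0) := by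
    refine squeeze_zero_norm' (a := fun x : ℝ => x ^ (-(1 - s.re))) ?_
      (tendsto_rpow_neg_atTop (by linarith))
    filter_upwards [eventually_gt_atTop 0] with x hx
    rw [norm_mul, Complex.norm_cpow_eq_rpow_re_of_pos hx, Complex.norm_real, neg_sub]
    exact mul_le_of_le_one_left (by positivity) (Real.abs_sin_le_one x)
  have hlim := hB.sub (hI.const_mul (s - 1))
  have hval : (0 : ℂ) - (s - 1) * (Complex.Gamma (s - 1) * Complex.sin (Real.pi / 2 * (s - 1))) =
      Complex.Gamma s * Complex.cos (Real.pi / 2 * s) := by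
    have hG : Complex.Gamma s = (s - 1) * Complex.Gamma (s - 1) := by
      rw [← Complex.Gamma_add_one _ hs1, sub_add_cancel]
    rw [hG, mul_sub, mul_one, Complex.sin_sub_pi_div_two]
    ring
  rw [hval] at hlim
  refine hlim.congr' ?_
  filter_upwards [eventually_gt_atTop 0] with b hb
  exact (integral_Ioc_cos_mul_cpow h0 h1 hb).symm

lemma norm_integral_Ioc_cos_mul_cpow_le_rpow {s : ℂ} (h0 : 0 < s.re) {b : ℝ} (hb : 0 ≤ b) :
    ‖∫ x in Ioc (0 : ℝ) b, ((Real.cos x : ℝ) : ℂ) * (x : ℂ) ^ (s - 1)‖ ≤ b ^ s.re / s.re := by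
  refine (norm_integral_le_of_norm_le (integrableOn_Ioc_rpow_sub_one h0 hb) ?_).trans ?_
  · filter_upwards [ae_restrict_mem measurableSet_Ioc] with x hx
    exact norm_cos_mul_cpow_le s hx.1
  · rw [← intervalIntegral.integral_of_le hb, integral_rpow (Or.inl (by linarith)),
      sub_add_cancel, Real.zero_rpow h0.ne', sub_zero]

/-- A bound on the truncated transform uniform in the truncation `b` and growing only like
`|im s| ^ re s`: the range below `T = 1 + |im s|` is estimated trivially, the range above `T` after
integrating by parts. A single integration by parts on the whole range would only give growth
`|im s|`, too much for coefficients of size `1 / k ^ 2`. -/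
lemma norm_integral_Ioc_cos_mul_cpow_le {s : ℂ} (h0 : 0 < s.re) (h1 : s.re < 1) {b : ℝ}
    (hb : 0 < b) :
    ‖∫ x in Ioc (0 : ℝ) b, ((Real.cos x : ℝ) : ℂ) * (x : ℂ) ^ (s - 1)‖ ≤
      (1 / s.re + 2 + 1 / (1 - s.re)) * (1 + |s.im|) ^ s.re := by
  set T : ℝ := 1 + |s.im| with hT
  have hT1 : 1 ≤ T := by rw [hT]; linarith [abs_nonneg s.im]
  have hT0 : 0 < T := by linarith
  have hTs : 0 ≤ T ^ s.re := by positivity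
  have h1' : 0 < 1 - s.re := by linarith
  rcases le_or_gt b T with hbT | hbT
  · refine (norm_integral_Ioc_cos_mul_cpow_le_rpow h0 hb.le).trans ?_
    have : b ^ s.re / s.re ≤ 1 / s.re * T ^ s.re := by
      rw [div_mul_eq_mul_div, one_mul]
      gcongr
    refine this.trans ?_
    gcongr
    have : 0 < 1 / (1 - s.re) := by positivity
    linarith
  · have hm1 : -1 < (s - 1).re := by simpa using h0
    have hm0 : (s - 1).re < 0 := by simpa using h1
    have hsplit : ∫ x in Ioc (0 : ℝ) b, ((Real.sin x : ℝ) : ℂ) * (x : ℂ) ^ (s - 1 - 1) =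
        (∫ x in Ioc (0 : ℝ) T, ((Real.sin x : ℝ) : ℂ) * (x : ℂ) ^ (s - 1 - 1)) +
        ∫ x in Ioc T b, ((Real.sin x : ℝ) : ℂ) * (x : ℂ) ^ (s - 1 - 1) := by
      have hI := integrableOn_sin_mul_cpow hm1 hm0
      rw [← Ioc_union_Ioc_eq_Ioc hT0.le hbT.le]
      exact setIntegral_union (Ioc_disjoint_Ioc_of_le le_rfl) measurableSet_Ioc
        (hI.mono_set Ioc_subset_Ioi_self)
        (hI.mono_set (Ioc_subset_Ioi_self.trans (Ioi_subset_Ioi hT0.le)))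
    have hF : ∫ x in Ioc (0 : ℝ) b, ((Real.cos x : ℝ) : ℂ) * (x : ℂ) ^ (s - 1) =
        (∫ x in Ioc (0 : ℝ) T, ((Real.cos x : ℝ) : ℂ) * (x : ℂ) ^ (s - 1)) +
        ((Real.sin b : ℝ) : ℂ) * (b : ℂ) ^ (s - 1) - ((Real.sin T : ℝ) : ℂ) * (T : ℂ) ^ (s - 1) -
        (s - 1) * ∫ x in Ioc T b, ((Real.sin x : ℝ) : ℂ) * (x : ℂ) ^ (s - 1 - 1) := by
      rw [integral_Ioc_cos_mul_cpow h0 h1 hb, integral_Ioc_cos_mul_cpow h0 h1 hT0, hsplit]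
      ring
    have hTpow : T ^ (s.re - 1) ≤ T ^ s.re :=
      Real.rpow_le_rpow_of_exponent_le hT1 (by linarith)
    have hend : ∀ y : ℝ, T ≤ y → ‖((Real.sin y : ℝ) : ℂ) * (y : ℂ) ^ (s - 1)‖ ≤ T ^ s.re := by
      intro y hy
      rw [norm_mul, Complex.norm_cpow_eq_rpow_re_of_pos (hT0.trans_le hy), Complex.norm_real]
      have hy0 : 0 < y := hT0.trans_le hy
      refine (mul_le_of_le_one_left (by positivity) (Real.abs_sin_le_one y)).trans ?_
      refine le_trans ?_ hTpow
      exact Real.rpow_le_rpow_of_nonpos hT0 hy (by simpa using h1.le)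
    have htail : ‖∫ x in Ioc T b, ((Real.sin x : ℝ) : ℂ) * (x : ℂ) ^ (s - 1 - 1)‖ ≤
        T ^ (s.re - 1) / (1 - s.re) := by
      have hint : IntegrableOn (fun x : ℝ => x ^ (s.re - 1 - 1)) (Ioi T) :=
        integrableOn_Ioi_rpow_of_lt (by linarith) hT0
      refine (norm_integral_le_of_norm_le
        (hint.mono_set (Ioc_subset_Ioi_self : Ioc T b ⊆ Ioi T)) ?_).trans ?_
      · filter_upwards [ae_restrict_mem measurableSet_Ioc] with x hx
        have hx0 : 0 < x := hT0.trans hx.1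
        rw [norm_mul, Complex.norm_cpow_eq_rpow_re_of_pos hx0, Complex.norm_real]
        exact mul_le_of_le_one_left (by positivity) (Real.abs_sin_le_one x)
      · refine (setIntegral_mono_set hint ?_ (Ioc_subset_Ioi_self : Ioc T b ⊆ Ioi T).eventuallyLE).trans ?_
        · filter_upwards [ae_restrict_mem measurableSet_Ioi] with x hx
          have hx0 : 0 < x := hT0.trans hx
          simp only [Pi.zero_apply]
          positivity
        · rw [integral_Ioi_rpow_of_lt (by linarith) hT0, sub_add_cancel,
            ← neg_sub 1 s.re, div_neg, neg_div, neg_neg]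
    have hs1 : ‖s - 1‖ ≤ T := by
      refine (Complex.norm_le_abs_re_add_abs_im _).trans ?_
      have : |(s - 1).re| ≤ 1 := by
        rw [abs_le]
        constructor <;> linarith
      simp only [Complex.sub_im, Complex.one_im, sub_zero]
      rw [hT]
      linarith
    have htail' : ‖(s - 1) * ∫ x in Ioc T b, ((Real.sin x : ℝ) : ℂ) * (x : ℂ) ^ (s - 1 - 1)‖ ≤
        1 / (1 - s.re) * T ^ s.re := by
      rw [norm_mul]
      calc _ ≤ T * (T ^ (s.re - 1) / (1 - s.re)) := by gcongr
        _ = 1 / (1 - s.re) * (T ^ (s.re - 1) * T) := by ring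
        _ = _ := by rw [← Real.rpow_add_one hT0.ne', sub_add_cancel]
    rw [hF]
    refine (norm_sub_le _ _).trans ?_
    have e1 := norm_sub_le ((∫ x in Ioc (0 : ℝ) T, ((Real.cos x : ℝ) : ℂ) * (x : ℂ) ^ (s - 1)) +
        ((Real.sin b : ℝ) : ℂ) * (b : ℂ) ^ (s - 1)) (((Real.sin T : ℝ) : ℂ) * (T : ℂ) ^ (s - 1))
    have e2 := norm_add_le (∫ x in Ioc (0 : ℝ) T, ((Real.cos x : ℝ) : ℂ) * (x : ℂ) ^ (s - 1))
        (((Real.sin b : ℝ) : ℂ) * (b : ℂ) ^ (s - 1))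
    have e3 := norm_integral_Ioc_cos_mul_cpow_le_rpow h0 hT0.le
    have e4 := hend b hbT.le
    have e5 := hend T le_rfl
    have e6 : T ^ s.re / s.re = 1 / s.re * T ^ s.re := by ring
    linarith

/-! ### Termwise integration of the Fourier series -/

/-- Termwise integration of the Fourier series of `θ (log x)` against `g x * x ^ (-α)`; all terms have
the same absolute value up to the factor `‖cfs k‖`. -/
lemma hasSum_setIntegral_mul {α : ℝ} {θ : ℝ → ℝ} {cfs : ℤ → ℂ} {ctil : ℝ}
    (hsum : Summable fun k : ℤ => ‖cfs k‖)
    (hθ : ∀ x : ℝ, HasSum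
      (fun k : ℤ => cfs k * Complex.exp (Complex.I * (k : ℂ) * (ctil : ℂ) * (x : ℂ))) (θ x : ℂ))
    {S : Set ℝ} (hS : MeasurableSet S) (hS0 : S ⊆ Ioi 0) {g : ℝ → ℝ} (hg : Measurable g)
    (hint : IntegrableOn (fun x : ℝ => |g x| * x ^ (-α)) S) :
    HasSum (fun k : ℤ => cfs k *
        ∫ x in S, (g x : ℂ) * (x : ℂ) ^ (Complex.I * (k : ℂ) * (ctil : ℂ) - (α : ℂ) + 1 - 1))
      ((∫ x in S, g x * (x ^ (-α) * θ (Real.log x)) : ℝ) : ℂ) := by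
  have hnorm : ∀ k : ℤ, ∀ x ∈ S, ‖cfs k *
      ((g x : ℂ) * (x : ℂ) ^ (Complex.I * (k : ℂ) * (ctil : ℂ) - (α : ℂ) + 1 - 1))‖ =
      ‖cfs k‖ * (|g x| * x ^ (-α)) := by
    intro k x hx
    rw [norm_mul, norm_mul, Complex.norm_cpow_eq_rpow_re_of_pos (hS0 hx), Complex.norm_real]
    simp
  have hF : ∀ k : ℤ, IntegrableOn (fun x : ℝ => cfs k *
      ((g x : ℂ) * (x : ℂ) ^ (Complex.I * (k : ℂ) * (ctil : ℂ) - (α : ℂ) + 1 - 1))) S := by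
    intro k
    refine Integrable.mono' (hint.const_mul ‖cfs k‖) (by fun_prop) ?_
    filter_upwards [ae_restrict_mem hS] with x hx
    exact (hnorm k x hx).le
  have hFs : Summable fun k : ℤ => ∫ x in S, ‖cfs k *
      ((g x : ℂ) * (x : ℂ) ^ (Complex.I * (k : ℂ) * (ctil : ℂ) - (α : ℂ) + 1 - 1))‖ := by
    refine (hsum.mul_right (∫ x in S, |g x| * x ^ (-α))).congr fun k => ?_
    rw [setIntegral_congr_fun hS (hnorm k), integral_const_mul]
  have h := hasSum_integral_of_summable_integral_norm hF hFs
  simp_rw [integral_const_mul] at h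
  refine (congrArg (fun z => HasSum _ z) ?_).mp h
  rw [← integral_complex_ofReal]
  refine setIntegral_congr_fun hS fun x hx => ?_
  have hx0 : 0 < x := hS0 hx
  have hxc : (x : ℂ) ≠ 0 := by exact_mod_cast hx0.ne'
  have e : HasSum (fun k : ℤ => cfs k *
      ((g x : ℂ) * (x : ℂ) ^ (Complex.I * (k : ℂ) * (ctil : ℂ) - (α : ℂ) + 1 - 1)))
      ((g x * (x ^ (-α) * θ (Real.log x)) : ℝ) : ℂ) := by
    have e0 := (hθ (Real.log x)).mul_left ((g x * x ^ (-α) : ℝ) : ℂ)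
    convert! e0 using 1
    · funext k
      rw [show Complex.I * (k : ℂ) * (ctil : ℂ) - (α : ℂ) + 1 - 1 =
        ((-α : ℝ) : ℂ) + Complex.I * (k : ℂ) * (ctil : ℂ) by push_cast; ring,
        Complex.cpow_add _ _ hxc, ← Complex.ofReal_cpow hx0.le,
        Complex.cpow_def_of_ne_zero hxc (Complex.I * (k : ℂ) * (ctil : ℂ)),
        ← Complex.ofReal_log hx0.le, mul_comm ((Real.log x : ℝ) : ℂ)]
      push_cast
      ring
    · push_cast
      ring
  exact e.tsum_eq

theorem stmt10 (c α : ℝ) (hc : 1 < c) (hα : α ∈ Set.Ioo (0 : ℝ) 2) (hα1 : α ≠ 1)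
    (θ : ℝ → ℝ) (cfs : ℤ → ℂ) (hθ : IsSmoothAdmissible c α θ cfs)
    (ctil : ℝ) (hctil : ctil = 2 * Real.pi * α / Real.log c)
    (d : ℂ)
    (hd : d = ∑' k : ℤ,
      cfs k * Complex.Gamma (Complex.I * (k : ℂ) * (ctil : ℂ) - (α : ℂ) + 1) *
        Complex.cos ((Real.pi : ℂ) / 2 * (Complex.I * (k : ℂ) * (ctil : ℂ) - (α : ℂ) + 1))) :
    d.im = 0 ∧
    (α < 1 →
      Tendsto (fun b : ℝ => ∫ x in Set.Ioc (0 : ℝ) b, Real.cos x * (x ^ (-α) * θ (Real.log x)))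
        atTop (nhds d.re)) ∧
    (1 < α →
      ∫ x in Set.Ioi (0 : ℝ), (Real.cos x - 1) * (x ^ (-α) * θ (Real.log x)) = d.re) := by
  obtain ⟨hα0, hα2⟩ := hα
  obtain ⟨-, -, -, ⟨C₀, hC₀, hcfs⟩, hsum, hθs⟩ := hθ
  rw [← hctil] at hθs
  have hre : ∀ k : ℤ, (Complex.I * (k : ℂ) * (ctil : ℂ) - (α : ℂ) + 1).re = 1 - α := by
    intro k; simp; ring
  have him : ∀ k : ℤ, (Complex.I * (k : ℂ) * (ctil : ℂ) - (α : ℂ) + 1).im = k * ctil := by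
    intro k; simp
  rcases lt_or_gt_of_ne hα1 with hlt | hgt
  · have hlim : Tendsto (fun b : ℝ =>
        ((∫ x in Ioc (0 : ℝ) b, Real.cos x * (x ^ (-α) * θ (Real.log x)) : ℝ) : ℂ))
        atTop (nhds d) := by
      set A : ℝ := 1 / (1 - α) + 2 + 1 / (1 - (1 - α)) with hA
      have hA0 : 0 ≤ A := by
        have : 0 < 1 - α := by linarith
        rw [hA, sub_sub_cancel]
        positivity
      have hα' : 0 ≤ 1 - α := by linarith
      rw [hd]
      refine (tendsto_tsum_of_dominated_convergence
        (f := fun (b : ℝ) (k : ℤ) => cfs k * ∫ x in Ioc (0 : ℝ) b, ((Real.cos x : ℝ) : ℂ) *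
          (x : ℂ) ^ (Complex.I * (k : ℂ) * (ctil : ℂ) - (α : ℂ) + 1 - 1))
        -- The coefficient bound says nothing at `k = 0`, and there `|k| ^ (-(1 + α))` is `0 ^ _ = 0`,
        -- so this term is majorized separately.
        (bound := fun k : ℤ => C₀ * A * (1 + |ctil|) ^ (1 - α) * |(k : ℝ)| ^ (-(1 + α)) +
          if k = 0 then ‖cfs 0‖ * A else 0) ?_ ?_ ?_).congr' ?_
      · exact ((Real.summable_abs_int_rpow (b := 1 + α) (by linarith)).mul_left _).add
          (hasSum_ite_eq (0 : ℤ) (‖cfs 0‖ * A)).summable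
      · intro k
        rw [mul_assoc (cfs k)]
        exact (tendsto_integral_Ioc_cos_mul_cpow
          (s := Complex.I * (k : ℂ) * (ctil : ℂ) - (α : ℂ) + 1) (by rw [hre]; linarith)
          (by rw [hre]; linarith)).const_mul _
      · filter_upwards [eventually_gt_atTop 0] with b hb k
        have hB := norm_integral_Ioc_cos_mul_cpow_le
          (s := Complex.I * (k : ℂ) * (ctil : ℂ) - (α : ℂ) + 1)
          (by rw [hre]; linarith) (by rw [hre]; linarith) hb
        rw [hre, him, ← hA] at hB
        rw [norm_mul]
        refine (mul_le_mul_of_nonneg_left hB (norm_nonneg _)).trans ?_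
        by_cases hk : k = 0
        · subst hk
          simp only [Int.cast_zero, zero_mul, abs_zero, add_zero, Real.one_rpow, mul_one, if_true]
          have : 0 ≤ C₀ * A * (1 + |ctil|) ^ (1 - α) * (0 : ℝ) ^ (-(1 + α)) := by positivity
          linarith
        · rw [if_neg hk, add_zero]
          have hk1 : (1 : ℝ) ≤ |(k : ℝ)| := by exact_mod_cast Int.one_le_abs hk
          have hk0 : (0 : ℝ) < |(k : ℝ)| := by linarith
          have hT : (1 + |(k : ℝ) * ctil|) ^ (1 - α) ≤
              (1 + |ctil|) ^ (1 - α) * |(k : ℝ)| ^ (1 - α) := by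
            rw [← Real.mul_rpow (by positivity) (by positivity), abs_mul]
            gcongr
            nlinarith [abs_nonneg ctil]
          have hpow : |(k : ℝ)| ^ (-(1 + α)) = |(k : ℝ)| ^ (1 - α) / (k : ℝ) ^ 2 := by
            rw [← sq_abs (k : ℝ), ← Real.rpow_natCast, ← Real.rpow_sub hk0]
            congr 1
            push_cast
            ring
          rw [hpow]
          calc _ ≤ C₀ / (k : ℝ) ^ 2 * (A * ((1 + |ctil|) ^ (1 - α) * |(k : ℝ)| ^ (1 - α))) := by
                gcongr
                exact hcfs k hk
            _ = _ := by ring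
      · filter_upwards [eventually_gt_atTop 0] with b hb
        refine (hasSum_setIntegral_mul hsum hθs measurableSet_Ioc Ioc_subset_Ioi_self
          Real.continuous_cos.measurable ?_).tsum_eq
        have hpow := integrableOn_Ioc_rpow_sub_one (σ := 1 - α) (by linarith) hb.le
        rw [show 1 - α - 1 = -α by ring] at hpow
        refine Integrable.mono' hpow (by fun_prop) ?_
        filter_upwards [ae_restrict_mem measurableSet_Ioc] with x hx
        have hx0 : 0 < x := hx.1
        rw [Real.norm_of_nonneg (by positivity)]
        exact mul_le_of_le_one_left (by positivity) (Real.abs_cos_le_one x)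
    have h1 := (Complex.continuous_re.tendsto d).comp hlim
    have h2 := (Complex.continuous_im.tendsto d).comp hlim
    refine ⟨?_, fun _ => ?_, fun h => absurd h (by linarith)⟩
    · exact tendsto_nhds_unique h2 (tendsto_const_nhds.congr fun b => by simp)
    · exact h1.congr fun b => by simp
  · have hval : d = ((∫ x in Ioi (0 : ℝ),
        (Real.cos x - 1) * (x ^ (-α) * θ (Real.log x)) : ℝ) : ℂ) := by
      rw [hd]
      have hI := integrableOn_cos_sub_one_mul_cpow (s := ((1 - α : ℝ) : ℂ))
        (by simp; linarith) (by simp; linarith)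
      refine HasSum.tsum_eq ?_
      have hint : IntegrableOn (fun x : ℝ => |Real.cos x - 1| * x ^ (-α)) (Ioi 0) := by
        refine hI.norm.congr ?_
        filter_upwards [ae_restrict_mem measurableSet_Ioi] with x hx
        rw [norm_mul, Complex.norm_cpow_eq_rpow_re_of_pos hx, Complex.norm_real, Real.norm_eq_abs]
        simp
      have hS := hasSum_setIntegral_mul (α := α) hsum hθs measurableSet_Ioi Subset.rfl
        (g := fun x => Real.cos x - 1) (by fun_prop) hint
      refine hS.congr_fun fun k => ?_
      rw [integral_cos_sub_one_mul_cpow (by rw [hre]; linarith) (by rw [hre]; linarith),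
        mul_assoc (cfs k)]
    rw [hval]
    refine ⟨Complex.ofReal_im _, fun h => absurd h (by linarith), fun _ => (Complex.ofReal_re _).symm⟩
end
end
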